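/- Let n ≥ 3 be odd, let m_1, m_2 be positive integers with m_1 < F_{n-1} and m_2 < F_{n-1}, and set c_1 = F_{n+1} m_1 + F_n m_2, c_2 = F_n m_1 + F_{n-1} m_2. Let e_2 be an integer and put c̄_2 = c_2 + e_2. If c̄_2 > 0 and c_1/c̄_2 > F_n/F_{n-1} (as real numbers), then e_2 = ⌊c̄_2 - c_1·F_{n-1}/F_n⌋, the floor of the real number c̄_2 - c_1·F_{n-1}/F_n. -/

import Mathlib

/-!
Cassini's identity `F_n ^ 2 - F_{n+1} F_{n-1} = 1` for odd `n` gives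
`F_n c₂ - F_{n-1} c₁ = m₁`, the coefficient of `m₂` cancelling. Hence the real number under the
floor is `e₂ + m₁ / F_n`, and `0 < m₁ < F_{n-1} ≤ F_n` places the last term in `[0, 1)`.
-/

/-- Cassini's identity at odd indices. -/
lemma fib_cassini_odd (k : ℕ) :
    (Nat.fib (2 * k + 1) : ℤ) ^ 2 = Nat.fib (2 * k + 2) * Nat.fib (2 * k) + 1 := by
  induction k with
  | zero => simp
  | succ k ih =>
    have h2 : Nat.fib (2 * k + 2) = Nat.fib (2 * k) + Nat.fib (2 * k + 1) := Nat.fib_add_two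
    have h3 : Nat.fib (2 * k + 3) = Nat.fib (2 * k + 1) + Nat.fib (2 * k + 2) := Nat.fib_add_two
    have h4 : Nat.fib (2 * k + 4) = Nat.fib (2 * k + 2) + Nat.fib (2 * k + 3) := Nat.fib_add_two
    rw [show 2 * (k + 1) + 1 = 2 * k + 3 by ring, show 2 * (k + 1) + 2 = 2 * k + 4 by ring,
      show 2 * (k + 1) = 2 * k + 2 by ring, h4, h3]
    rw [h2] at ih ⊢
    push_cast at ih ⊢
    linear_combination ih


theorem stmt_11 (n : ℕ) (hn : 3 ≤ n) (hodd : Odd n)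
    (m₁ m₂ : ℤ) (hm₁ : 0 < m₁) (hm₂ : 0 < m₂)
    (hm₁' : m₁ < (Nat.fib (n - 1) : ℤ)) (hm₂' : m₂ < (Nat.fib (n - 1) : ℤ))
    (c₁ c₂ : ℤ)
    (hc₁ : c₁ = (Nat.fib (n + 1) : ℤ) * m₁ + (Nat.fib n : ℤ) * m₂)
    (hc₂ : c₂ = (Nat.fib n : ℤ) * m₁ + (Nat.fib (n - 1) : ℤ) * m₂)
    (e₂ : ℤ) (cbar₂ : ℤ) (hbar : cbar₂ = c₂ + e₂)
    (hpos : 0 < cbar₂)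
    (hratio : (Nat.fib n : ℝ) / (Nat.fib (n - 1) : ℝ) < (c₁ : ℝ) / (cbar₂ : ℝ)) :
    e₂ = ⌊(cbar₂ : ℝ) - (c₁ : ℝ) * ((Nat.fib (n - 1) : ℝ) / (Nat.fib n : ℝ))⌋ := by
  obtain ⟨k, rfl⟩ := hodd
  rw [show 2 * k + 1 - 1 = 2 * k by omega] at *
  have hcas : (Nat.fib (2 * k + 1) : ℝ) ^ 2 = Nat.fib (2 * k + 2) * Nat.fib (2 * k) + 1 := by
    exact_mod_cast fib_cassini_odd k
  have hF : (0 : ℝ) < Nat.fib (2 * k + 1) := by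
    exact_mod_cast Nat.fib_pos.2 (by omega)
  have hle : (Nat.fib (2 * k) : ℝ) ≤ Nat.fib (2 * k + 1) := by
    exact_mod_cast Nat.fib_le_fib_succ
  have hm0 : (0 : ℝ) < m₁ := by exact_mod_cast hm₁
  have hm1 : (m₁ : ℝ) < Nat.fib (2 * k) := by exact_mod_cast hm₁'
  have key : (cbar₂ : ℝ) - (c₁ : ℝ) * ((Nat.fib (2 * k) : ℝ) / (Nat.fib (2 * k + 1) : ℝ))
      = e₂ + m₁ / Nat.fib (2 * k + 1) := by
    rw [hbar, hc₁, hc₂]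
    push_cast
    field_simp
    linear_combination (m₁ : ℝ) * hcas
  rw [key, eq_comm, Int.floor_eq_iff]
  constructor
  · have := div_pos hm0 hF
    linarith
  · have := (div_lt_one hF).2 (hm1.trans_le hle)
    linarith
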